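/- Let {n_k} satisfy sup_k V(n_k) = ∞. Then there exists a martingale F ∈ H_{1/2}(G) such that ω_{H_{1/2}}(1/2^{|n_k|}, F) = O(1/V(n_k)^2) as k → ∞, yet ‖σ_{n_k}F − F‖_{1/2} does not tend to 0. -/

import Mathlib

open MeasureTheory Filter Topology ENNReal NNReal

noncomputable section

/-- The dyadic group `G = (ℤ/2)^ℕ`. -/
abbrev G : Type := ℕ → ZMod 2

instance : TopologicalSpace (ZMod 2) := ⊥
instance : DiscreteTopology (ZMod 2) := ⟨rfl⟩
instance : MeasurableSpace G := borel G
instance : BorelSpace G := ⟨rfl⟩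

/-- Normalized Haar measure on `G`. -/
def μG : Measure G := Measure.addHaarMeasure ⟨⟨Set.univ, isCompact_univ⟩, by simp⟩

/-- Cylinder `I_n(x) = {y : y_0 = x_0, ..., y_{n-1} = x_{n-1}}`. -/
def cyl (n : ℕ) (x : G) : Set G := {y | ∀ k < n, y k = x k}

/-- `I_n = I_n(0)`. -/
def I₀ (n : ℕ) : Set G := cyl n 0

/-- `e t`: the element of `G` with a single 1 in coordinate `t`. -/
def e (t : ℕ) : G := fun k => if k = t then 1 else 0

/-- Rademacher functions `r_k(x) = (-1)^{x_k}`. -/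
def rade (k : ℕ) (x : G) : ℝ := (-1 : ℝ) ^ (x k).val

/-- Walsh functions `w_n = ∏ r_k^{n_k}` (binary digits `n_k` of `n`). -/
def walsh (n : ℕ) (x : G) : ℝ :=
  ∏ k ∈ Finset.range (n + 1), if n.testBit k then rade k x else 1

/-- Walsh–Dirichlet kernel `D_n = ∑_{k<n} w_k`. -/
def D (n : ℕ) (x : G) : ℝ := ∑ k ∈ Finset.range n, walsh k x

/-- Walsh–Fejér kernel `K_n = (1/n) ∑_{k=1}^n D_k`. -/
def K (n : ℕ) (x : G) : ℝ := (1 / n) * ∑ k ∈ Finset.Icc 1 n, D k x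

/-- Binary variation `V(n) = n_0 + ∑_{k≥1} |n_k - n_{k-1}|`. -/
def V (n : ℕ) : ℕ :=
  (if n.testBit 0 then 1 else 0) +
    ∑ k ∈ Finset.Icc 1 (n + 1), if n.testBit k ≠ n.testBit (k - 1) then 1 else 0

/-- `|n|`: index of the highest nonzero binary digit of `n`. -/
def hi (n : ℕ) : ℕ := Nat.log 2 n

/-- `[n]`: index of the lowest nonzero binary digit of `n`. -/
def lo (n : ℕ) : ℕ := padicValNat 2 n

/-- `d(n) = |n| - [n]`. -/
def dd (n : ℕ) : ℕ := hi n - lo n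

/-- A dyadic martingale: `F n` depends only on the first `n` coordinates, and
`F n` is the average of the two possible extensions, i.e. the martingale property
with respect to the dyadic filtration. -/
def IsDyadicMartingale (F : ℕ → G → ℝ) : Prop :=
  (∀ n x y, (∀ k < n, x k = y k) → F n x = F n y) ∧
  (∀ n x, F n x = (F (n+1) x + F (n+1) (Function.update x n (x n + 1))) / 2)

/-- `k`-th Walsh–Fourier coefficient of a martingale,
`F̂(k) = lim_n ∫ F_n w_k dμ` (the integrals are eventually constant). -/
def mcoeff (F : ℕ → G → ℝ) (k : ℕ) : ℝ := ∫ x, F (k+1) x * walsh k x ∂μG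

/-- Partial sums `S_m F` of the Walsh–Fourier series of a martingale. -/
def S (F : ℕ → G → ℝ) (m : ℕ) (x : G) : ℝ := ∑ j ∈ Finset.range m, mcoeff F j * walsh j x

/-- Fejér means `σ_n F = (1/n) ∑_{k=1}^n S_k F`. -/
def σ (F : ℕ → G → ℝ) (n : ℕ) (x : G) : ℝ := (1 / n) * ∑ k ∈ Finset.Icc 1 n, S F k x

/-- `H_p` quasi-norm of a martingale: `‖sup_n |F_n|‖_{L_p}`. -/
def HpNorm (p : ℝ) (F : ℕ → G → ℝ) : ℝ≥0∞ :=
  (∫⁻ x, (⨆ n, (‖F n x‖₊ : ℝ≥0∞)) ^ p ∂μG) ^ (1 / p)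

/-- Membership in the martingale Hardy space `H_p(G)`. -/
def MemHp (p : ℝ) (F : ℕ → G → ℝ) : Prop := IsDyadicMartingale F ∧ HpNorm p F < ⊤

/-- `L_p` quasi-norm of a function on `G`. -/
def LpN (p : ℝ) (f : G → ℝ) : ℝ≥0∞ := (∫⁻ x, (‖f x‖₊ : ℝ≥0∞) ^ p ∂μG) ^ (1 / p)

/-- Weak `L_p` quasi-norm: `‖f‖_{L_{p,∞}} = sup_{λ>0} λ μ(|f|>λ)^{1/p}`. -/
def wLp (p : ℝ) (f : G → ℝ) : ℝ≥0∞ :=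
  ⨆ t : ℝ≥0, (t : ℝ≥0∞) * (μG {x | (t : ℝ) < |f x|}) ^ (1 / p)

/-- Walsh–Fourier coefficient of an integrable function. -/
def fcoeff (f : G → ℝ) (j : ℕ) : ℝ := ∫ x, f x * walsh j x ∂μG

/-- Partial sums of the Walsh–Fourier series of a function. -/
def Sf (f : G → ℝ) (m : ℕ) (x : G) : ℝ := ∑ j ∈ Finset.range m, fcoeff f j * walsh j x

/-- Fejér means of the Walsh–Fourier series of a function. -/
def σf (f : G → ℝ) (n : ℕ) (x : G) : ℝ := (1 / n) * ∑ k ∈ Finset.Icc 1 n, Sf f k x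

/-- The martingale `(S_{2^m} g)_m` generated by a function `g`; used to interpret the
`H_p` norm of a function such as `σ_n F`. -/
def funMart (g : G → ℝ) : ℕ → G → ℝ := fun m => Sf g (2 ^ m)

/-- Modulus of continuity in `H_p`: `ω_{H_p}(1/2^n, F) = ‖F - S_{2^n} F‖_{H_p}`,
where `F - S_{2^n}F` is the martingale with `m`-th term `F_m - S_{min(2^n, 2^m)}F`. -/
def ωHp (p : ℝ) (n : ℕ) (F : ℕ → G → ℝ) : ℝ≥0∞ :=
  HpNorm p (fun m x => F m x - S F (min (2 ^ n) (2 ^ m)) x)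

/-- The a.e. limit of a martingale (as a limsup, which agrees a.e. with the limit
for martingales in `H_p`). -/
def mLim (F : ℕ → G → ℝ) (x : G) : ℝ := Filter.limsup (fun m => F m x) Filter.atTop

/-- The set `E_l := I_{l+1}(e_{l-1} + e_l)`, with the convention
`I_1(e_{-1}+e_0) = I_2(e_0+e_1)` for `l = 0`. -/
def Eset (l : ℕ) : Set G :=
  if l = 0 then cyl 2 (e 0 + e 1) else cyl (l + 1) (e (l - 1) + e l)

/-!
Choose indices `n_{k_j}` along which `v_j = V(n_{k_j})` at least doubles, `N_j = |n_{k_j}|` grows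
geometrically, and `v_j` is the largest value of `V` among all `n_i` with `|n_i| ≤ N_j`. Put
`F = ∑ v_j⁻² 2^{N_j} (D_{2^{N_j + 1}} - D_{2^{N_j}})`. The `j`-th block has `H_{1/2}` quasi-norm at
most `v_j⁻²`, and the square root of the `H_{1/2}` quasi-norm is subadditive, so the tail of `F`
from `|n_i|` on is dominated by a geometric series and is at most `4 / V(n_i)²`, by the maximality
of `v_j`.

For the divergence let `n = n_{k_j}`. On `E_{s+1}` with `s + 2 ≤ N_j` the difference `σ_n F - F` is
`v_j⁻² 2^{N_j} K_n`, up to a small error from the earlier blocks. If the digits `s` and `s + 1` of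
`n` differ, then only `n mod 2^{s+2}` matters for `|n K_n|` on `E_{s+1}` and `|n K_n| ≥ 4^s / 2`
there, so `|σ_n F - F|^{1/2} ≳ 2^s / v_j` on `E_{s+1}`, a set of measure `2^{-s-2}`. The sets
`E_{s+1}` are disjoint and `n` has about `v_j` digit changes, each of which contributes about
`1 / v_j` to `∫ |σ_n F - F|^{1/2}`.
-/

section Walsh

lemma rade_add (k : ℕ) (x y : G) : rade k (x + y) = rade k x * rade k y := by
  have h : ∀ a b : ZMod 2, (-1 : ℤ) ^ (a + b).val = (-1) ^ a.val * (-1) ^ b.val := by decide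
  simp only [rade, Pi.add_apply]
  exact_mod_cast h (x k) (y k)

lemma rade_of_eq_zero {k : ℕ} {x : G} (h : x k = 0) : rade k x = 1 := by simp [rade, h]

lemma rade_of_eq_one {k : ℕ} {x : G} (h : x k = 1) : rade k x = -1 := by
  simp [rade, h, ZMod.val_one]

lemma abs_rade (k : ℕ) (x : G) : |rade k x| = 1 := by simp [rade]

lemma continuous_rade (k : ℕ) : Continuous (rade k) :=
  (continuous_of_discreteTopology (f := fun a : ZMod 2 => (-1 : ℝ) ^ a.val)).comp
    (continuous_apply k)

lemma testBit_eq_false_of_lt_two_pow_of_le {n m k : ℕ} (hn : n < 2 ^ m) (hk : m ≤ k) :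
    n.testBit k = false :=
  Nat.testBit_lt_two_pow (hn.trans_le (Nat.pow_le_pow_right two_pos hk))

lemma walsh_eq_prod_of_lt_two_pow {n m : ℕ} (h : n < 2 ^ m) (x : G) :
    walsh n x = ∏ k ∈ Finset.range m, if n.testBit k then rade k x else 1 := by
  have hfactor : ∀ l, n < 2 ^ l → ∀ k, k ∉ Finset.range l →
      (if n.testBit k then rade k x else 1) = 1 := fun l hl k hk => by
    rw [testBit_eq_false_of_lt_two_pow_of_le hl (by simpa using hk)]
    exact if_neg Bool.false_ne_true
  exact Finset.prod_congr_of_eq_on_inter (fun k _ => hfactor m h k)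
    (fun k _ => hfactor (n + 1) (Nat.lt_two_pow_self.trans
      (Nat.pow_lt_pow_right one_lt_two n.lt_succ_self)) k) fun _ _ _ => rfl

lemma walsh_zero (x : G) : walsh 0 x = 1 := by simp [walsh]

lemma walsh_two_pow_mul_add {t r : ℕ} (h : ℕ) (hr : r < 2 ^ t) (x : G) :
    walsh (2 ^ t * h + r) x = walsh (2 ^ t * h) x * walsh r x := by
  obtain ⟨m, hm⟩ : ∃ m, 2 ^ t * h + r < 2 ^ m := ⟨_, Nat.lt_two_pow_self⟩
  rw [walsh_eq_prod_of_lt_two_pow hm, walsh_eq_prod_of_lt_two_pow (n := r) (m := m) (by omega),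
    walsh_eq_prod_of_lt_two_pow (n := 2 ^ t * h) (m := m) (by omega), ← Finset.prod_mul_distrib]
  refine Finset.prod_congr rfl fun k _ => ?_
  rw [Nat.testBit_two_pow_mul_add h hr, Nat.testBit_two_pow_mul]
  rcases lt_or_ge k t with hk | hk
  · simp [hk, hk.not_ge]
  · simp [hk, hk.not_gt, testBit_eq_false_of_lt_two_pow_of_le hr hk]

lemma walsh_two_pow (t : ℕ) (x : G) : walsh (2 ^ t) x = rade t x := by
  rw [walsh_eq_prod_of_lt_two_pow (Nat.pow_lt_pow_right one_lt_two t.lt_succ_self),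
    Finset.prod_range_succ, Finset.prod_eq_one]
  · simp
  · intro k hk
    simp [(Finset.mem_range.mp hk).ne']

lemma walsh_two_pow_add {t r : ℕ} (hr : r < 2 ^ t) (x : G) :
    walsh (2 ^ t + r) x = rade t x * walsh r x := by
  simpa [walsh_two_pow] using walsh_two_pow_mul_add 1 hr x

lemma abs_walsh (n : ℕ) (x : G) : |walsh n x| = 1 := by
  rw [walsh, Finset.abs_prod]
  refine Finset.prod_eq_one fun k _ => ?_
  split_ifs <;> simp [abs_rade]

lemma walsh_add (n : ℕ) (x y : G) : walsh n (x + y) = walsh n x * walsh n y := by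
  simp only [walsh, ← Finset.prod_mul_distrib]
  refine Finset.prod_congr rfl fun k _ => ?_
  split_ifs <;> simp [rade_add]

lemma continuous_walsh (n : ℕ) : Continuous (walsh n) := by
  unfold walsh
  refine continuous_finsetProd _ fun k _ => ?_
  split_ifs
  exacts [continuous_rade k, continuous_const]

lemma walsh_congr {n i : ℕ} (hin : i < 2 ^ n) {x y : G} (h : ∀ k < n, x k = y k) :
    walsh i x = walsh i y := by
  rw [walsh_eq_prod_of_lt_two_pow hin, walsh_eq_prod_of_lt_two_pow hin]
  refine Finset.prod_congr rfl fun k hk => ?_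
  simp [rade, h k (Finset.mem_range.mp hk)]

lemma walsh_of_mem_I₀ {n i : ℕ} (hin : i < 2 ^ n) {x : G} (h : x ∈ I₀ n) : walsh i x = 1 := by
  have hone : walsh i 0 = 1 := Finset.prod_eq_one fun k _ => by split_ifs <;> simp [rade]
  rw [walsh_congr hin h, hone]

lemma walsh_e (i t : ℕ) : walsh i (e t) = if i.testBit t then -1 else 1 := by
  have hit : i < 2 ^ (i + t + 1) :=
    Nat.lt_two_pow_self.trans_le (Nat.pow_le_pow_right two_pos (by omega))
  rw [walsh_eq_prod_of_lt_two_pow hit,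
    Finset.prod_eq_single_of_mem t (Finset.mem_range.mpr (by omega))]
  · rw [rade_of_eq_one (by simp [e])]
  · intro k _ hk
    rw [rade_of_eq_zero (by simp [e, hk]), ite_self]

end Walsh

section Kernels

/-- The unnormalized Fejér kernel `n K_n = ∑_{k=1}^n D_k`, whose recursions need no division. -/
def fejerSum (n : ℕ) (x : G) : ℝ := ∑ k ∈ Finset.Icc 1 n, D k x

variable {t r : ℕ} {x : G}

lemma K_eq_fejerSum_div (n : ℕ) (x : G) : K n x = fejerSum n x / n := by
  rw [K, fejerSum, one_div_mul_eq_div]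

lemma fejerSum_succ (n : ℕ) (x : G) : fejerSum (n + 1) x = fejerSum n x + D (n + 1) x :=
  Finset.sum_Icc_succ_top (Nat.le_add_left 1 n) _

lemma D_two_pow_mul_add (h : ℕ) (hr : r ≤ 2 ^ t) (x : G) :
    D (2 ^ t * h + r) x = D (2 ^ t * h) x + walsh (2 ^ t * h) x * D r x := by
  simp only [D, Finset.sum_range_add, Finset.mul_sum]
  congr 1
  exact Finset.sum_congr rfl fun k hk =>
    walsh_two_pow_mul_add h ((Finset.mem_range.mp hk).trans_le hr) x

lemma D_two_pow_add (hr : r ≤ 2 ^ t) (x : G) :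
    D (2 ^ t + r) x = D (2 ^ t) x + rade t x * D r x := by
  simpa [walsh_two_pow] using D_two_pow_mul_add 1 hr x

lemma fejerSum_two_pow_mul_add (h : ℕ) (hr : r ≤ 2 ^ t) (x : G) :
    fejerSum (2 ^ t * h + r) x =
      fejerSum (2 ^ t * h) x + r * D (2 ^ t * h) x + walsh (2 ^ t * h) x * fejerSum r x := by
  induction r with
  | zero => simp [fejerSum]
  | succ r ih =>
    rw [← add_assoc, fejerSum_succ, fejerSum_succ, ih (by omega), add_assoc (2 ^ t * h),
      D_two_pow_mul_add h hr]
    push_cast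
    ring

lemma fejerSum_two_pow_add (hr : r ≤ 2 ^ t) (x : G) :
    fejerSum (2 ^ t + r) x = fejerSum (2 ^ t) x + r * D (2 ^ t) x + rade t x * fejerSum r x := by
  simpa [walsh_two_pow] using fejerSum_two_pow_mul_add 1 hr x

lemma D_two_pow_mul_eq_zero (hD : D (2 ^ t) x = 0) (h : ℕ) : D (2 ^ t * h) x = 0 := by
  induction h with
  | zero => simp [D]
  | succ h ih => rw [mul_add_one, D_two_pow_mul_add h le_rfl, ih, hD, mul_zero, add_zero]

lemma fejerSum_two_pow_mul_eq_zero (hD : D (2 ^ t) x = 0) (hF : fejerSum (2 ^ t) x = 0) (h : ℕ) :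
    fejerSum (2 ^ t * h) x = 0 := by
  induction h with
  | zero => simp [fejerSum]
  | succ h ih =>
    rw [mul_add_one, fejerSum_two_pow_mul_add h le_rfl, ih, D_two_pow_mul_eq_zero hD, hF]
    simp

lemma mem_I₀_succ {n : ℕ} : x ∈ I₀ (n + 1) ↔ x ∈ I₀ n ∧ x n = 0 := Nat.forall_lt_succ_right

lemma D_of_mem_I₀ (hr : r ≤ 2 ^ t) (hx : x ∈ I₀ t) : D r x = r := by
  rw [D, Finset.sum_congr rfl fun k hk =>
    walsh_of_mem_I₀ ((Finset.mem_range.mp hk).trans_le hr) hx]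
  simp

lemma fejerSum_of_mem_I₀ (hr : r ≤ 2 ^ t) (hx : x ∈ I₀ t) :
    fejerSum r x = r * (r + 1) / 2 := by
  induction r with
  | zero => simp [fejerSum]
  | succ r ih =>
    rw [fejerSum_succ, ih (by omega), D_of_mem_I₀ hr hx]
    push_cast
    ring

lemma D_two_pow_of_notMem_I₀ {n : ℕ} (hx : x ∉ I₀ n) : D (2 ^ n) x = 0 := by
  induction n with
  | zero => exact absurd (fun k hk => absurd hk k.not_lt_zero) hx
  | succ n ih =>
    have h01 : ∀ a : ZMod 2, a = 0 ∨ a = 1 := by decide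
    rw [pow_succ, mul_two, D_two_pow_add le_rfl]
    rcases h01 (x n) with h | h
    · rw [ih fun hn => hx (mem_I₀_succ.mpr ⟨hn, h⟩), mul_zero, add_zero]
    · rw [rade_of_eq_one h]
      ring

lemma D_two_pow (n : ℕ) : D (2 ^ n) = (I₀ n).indicator fun _ => 2 ^ n := by
  ext x
  by_cases hx : x ∈ I₀ n
  · rw [Set.indicator_of_mem hx, D_of_mem_I₀ le_rfl hx]
    norm_cast
  · rw [Set.indicator_of_notMem hx, D_two_pow_of_notMem_I₀ hx]

end Kernels

section Haar

instance : IsProbabilityMeasure μG :=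
  ⟨Measure.addHaarMeasure_self (K₀ := ⟨⟨Set.univ, isCompact_univ⟩, by simp⟩)⟩

instance : μG.IsAddLeftInvariant := by unfold μG; infer_instance

lemma integrable_of_continuous {f : G → ℝ} (hf : Continuous f) : Integrable f μG :=
  hf.integrable_of_hasCompactSupport (HasCompactSupport.of_compactSpace f)

lemma integral_walsh_mul_walsh (i j : ℕ) :
    ∫ x, walsh i x * walsh j x ∂μG = if i = j then 1 else 0 := by
  split_ifs with hij
  · have hsq : ∀ x, walsh i x * walsh i x = 1 := fun x => by
      rw [← abs_mul_abs_self, abs_walsh, one_mul]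
    simp [← hij, hsq]
  · -- Translating by `e t`, where `t` is a digit at which `i` and `j` differ, flips the sign.
    obtain ⟨t, ht⟩ := Nat.exists_testBit_ne_of_ne hij
    have hflip : ∀ x, walsh i (e t + x) * walsh j (e t + x) = -(walsh i x * walsh j x) := by
      intro x
      rw [walsh_add, walsh_add, walsh_e, walsh_e]
      cases hit : i.testBit t <;> cases hjt : j.testBit t <;> simp_all
    have htranslate :=
      integral_add_left_eq_self (μ := μG) (fun x => walsh i x * walsh j x) (e t)
    simp only [hflip, integral_neg] at htranslate
    linarith

lemma integral_walsh (i : ℕ) : ∫ x, walsh i x ∂μG = if i = 0 then 1 else 0 := by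
  simpa [walsh_zero] using integral_walsh_mul_walsh i 0

lemma measurableSet_cyl (n : ℕ) (x : G) : MeasurableSet (cyl n x) := by
  have hcyl : cyl n x = ⋂ k ∈ Set.Iio n, (fun y : G => y k) ⁻¹' {x k} := by
    ext y
    simp [cyl]
  rw [hcyl]
  exact (isClosed_biInter fun k _ =>
    (isClosed_discrete _).preimage (continuous_apply k)).measurableSet

lemma measure_I₀ (n : ℕ) : μG (I₀ n) = (2 ^ n)⁻¹ := by
  have hD : ∫ x, D (2 ^ n) x ∂μG = 1 := by
    simp only [D]
    rw [integral_finsetSum _ fun i _ => integrable_of_continuous (continuous_walsh i)]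
    simp [integral_walsh]
  rw [D_two_pow, integral_indicator_const (s := I₀ n) _ (measurableSet_cyl n 0), smul_eq_mul] at hD
  rw [← ofReal_measureReal, eq_inv_of_mul_eq_one_left hD,
    ENNReal.ofReal_inv_of_pos (by positivity), ENNReal.ofReal_pow zero_le_two, ENNReal.ofReal_ofNat]

lemma measure_cyl (n : ℕ) (x : G) : μG (cyl n x) = (2 ^ n)⁻¹ := by
  have hpre : (fun y => x + y) ⁻¹' cyl n x = I₀ n := by
    ext y
    simp [cyl, I₀]
  rw [← measure_preimage_add μG x, hpre, measure_I₀]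

lemma lintegral_enorm_D_two_pow_rpow {p : ℝ} (hp : 0 < p) (n : ℕ) :
    ∫⁻ x, ‖D (2 ^ n) x‖ₑ ^ p ∂μG = (2 ^ n) ^ (p - 1) := by
  have hind : ∀ x, ‖D (2 ^ n) x‖ₑ ^ p = (I₀ n).indicator (fun _ => (2 ^ n : ℝ≥0∞) ^ p) x := by
    intro x
    by_cases hx : x ∈ I₀ n <;> simp [D_two_pow, hx, hp, Real.enorm_eq_ofReal_abs]
  simp only [hind]
  rw [lintegral_indicator_const (s := I₀ n) (measurableSet_cyl n 0), measure_I₀,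
    ENNReal.rpow_sub _ _ (by simp) (by simp), ENNReal.rpow_one, div_eq_mul_inv]

lemma continuous_D (n : ℕ) : Continuous (D n) :=
  continuous_finsetSum _ fun i _ => continuous_walsh i

end Haar

section Eset

variable {s : ℕ} {x : G}

lemma Eset_succ (s : ℕ) : Eset (s + 1) = cyl (s + 2) (e s + e (s + 1)) := by simp [Eset]

lemma mem_Eset_succ : x ∈ Eset (s + 1) ↔ x ∈ I₀ s ∧ x s = 1 ∧ x (s + 1) = 1 := by
  have hlt : (∀ k < s, x k = (e s + e (s + 1)) k) ↔ x ∈ I₀ s :=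
    forall₂_congr fun k hk => by simp [e, hk.ne, (hk.trans s.lt_succ_self).ne]
  rw [Eset_succ, cyl, Set.mem_ofPred_eq, Nat.forall_lt_succ_right, Nat.forall_lt_succ_right, hlt,
    and_assoc]
  simp [e]

lemma measurableSet_Eset_succ (s : ℕ) : MeasurableSet (Eset (s + 1)) := by
  rw [Eset_succ]
  exact measurableSet_cyl _ _

lemma measure_Eset_succ (s : ℕ) : μG (Eset (s + 1)) = (2 ^ (s + 2))⁻¹ := by
  rw [Eset_succ, measure_cyl]

lemma notMem_I₀_of_mem_Eset_succ (hx : x ∈ Eset (s + 1)) {n : ℕ} (hn : s < n) : x ∉ I₀ n :=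
  fun h => zero_ne_one ((h s hn).symm.trans (mem_Eset_succ.mp hx).2.1)

lemma pairwise_disjoint_Eset_succ : Pairwise (Function.onFun Disjoint fun s => Eset (s + 1)) :=
  (pairwise_disjoint_on _).mpr fun _ _ hst => Set.disjoint_left.mpr fun _ hs ht =>
    notMem_I₀_of_mem_Eset_succ hs hst (mem_Eset_succ.mp ht).1

lemma D_two_pow_of_mem_Eset_succ (hx : x ∈ Eset (s + 1)) {n : ℕ} (hn : s < n) :
    D (2 ^ n) x = 0 :=
  D_two_pow_of_notMem_I₀ (notMem_I₀_of_mem_Eset_succ hx hn)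

lemma fejerSum_two_pow_add_of_mem_Eset_succ (hx : x ∈ Eset (s + 1)) {r : ℕ} (hr : r ≤ 2 ^ s) :
    fejerSum (2 ^ s + r) x = 2 ^ s * (2 ^ s + 1) / 2 + r * 2 ^ s - r * (r + 1) / 2 := by
  obtain ⟨h₀, h₁, -⟩ := mem_Eset_succ.mp hx
  rw [fejerSum_two_pow_add hr, rade_of_eq_one h₁, D_of_mem_I₀ le_rfl h₀,
    fejerSum_of_mem_I₀ le_rfl h₀, fejerSum_of_mem_I₀ hr h₀]
  push_cast
  ring

lemma fejerSum_two_pow_succ_of_mem_Eset_succ (hx : x ∈ Eset (s + 1)) :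
    fejerSum (2 ^ (s + 1)) x = 2 ^ s * 2 ^ s := by
  rw [pow_succ, mul_two, fejerSum_two_pow_add_of_mem_Eset_succ hx le_rfl]
  push_cast
  ring

lemma fejerSum_two_pow_succ_add_of_mem_Eset_succ (hx : x ∈ Eset (s + 1)) {r : ℕ}
    (hr : r ≤ 2 ^ (s + 1)) :
    fejerSum (2 ^ (s + 1) + r) x = 2 ^ s * 2 ^ s - fejerSum r x := by
  rw [fejerSum_two_pow_add hr, rade_of_eq_one (mem_Eset_succ.mp hx).2.2,
    fejerSum_two_pow_succ_of_mem_Eset_succ hx, D_two_pow_of_mem_Eset_succ hx s.lt_succ_self]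
  ring

lemma fejerSum_two_pow_mul_of_mem_Eset_succ (hx : x ∈ Eset (s + 1)) (h : ℕ) :
    fejerSum (2 ^ (s + 2) * h) x = 0 := by
  refine fejerSum_two_pow_mul_eq_zero (D_two_pow_of_mem_Eset_succ hx (by omega)) ?_ h
  rw [pow_succ, mul_two, fejerSum_two_pow_succ_add_of_mem_Eset_succ hx le_rfl,
    fejerSum_two_pow_succ_of_mem_Eset_succ hx, sub_self]

lemma fejerSum_two_pow_of_mem_Eset_succ (hx : x ∈ Eset (s + 1)) {n : ℕ} (hn : s + 2 ≤ n) :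
    fejerSum (2 ^ n) x = 0 := by
  rw [← pow_mul_pow_sub 2 hn, fejerSum_two_pow_mul_of_mem_Eset_succ hx]

lemma le_fejerSum_of_mem_Eset_succ (hx : x ∈ Eset (s + 1)) {r : ℕ} (hr₁ : 2 ^ s ≤ r)
    (hr₃ : r < 3 * 2 ^ s) : 4 ^ s / 2 ≤ fejerSum r x := by
  have hsq : (4 : ℝ) ^ s = 2 ^ s * 2 ^ s := by rw [← mul_pow]; norm_num
  have hpos : (1 : ℝ) ≤ 2 ^ s := one_le_pow₀ one_le_two
  rw [hsq]
  rcases lt_or_ge r (2 ^ (s + 1)) with hr₂ | hr₂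
  · obtain ⟨a, rfl⟩ := Nat.exists_eq_add_of_le hr₁
    have ha : (a : ℝ) ≤ 2 ^ s := by exact_mod_cast (by omega : a ≤ 2 ^ s)
    rw [fejerSum_two_pow_add_of_mem_Eset_succ hx (by omega)]
    nlinarith [a.cast_nonneg (α := ℝ)]
  · obtain ⟨a, rfl⟩ := Nat.exists_eq_add_of_le hr₂
    have ha : (a : ℝ) + 1 ≤ 2 ^ s := by exact_mod_cast (by omega : a + 1 ≤ 2 ^ s)
    rw [fejerSum_two_pow_succ_add_of_mem_Eset_succ hx (by omega),
      fejerSum_of_mem_I₀ (by omega) (mem_Eset_succ.mp hx).1]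
    nlinarith [a.cast_nonneg (α := ℝ)]

lemma mod_two_pow_mem_Ico_of_testBit_ne {n : ℕ} (hn : n.testBit s ≠ n.testBit (s + 1)) :
    n % 2 ^ (s + 2) ∈ Set.Ico (2 ^ s) (3 * 2 ^ s) := by
  have hquot : n % 2 ^ (s + 2) / 2 ^ s = 1 ∨ n % 2 ^ (s + 2) / 2 ^ s = 2 := by
    rw [Nat.testBit_eq_decide_div_mod_eq, Nat.testBit_eq_decide_div_mod_eq, pow_succ,
      ← Nat.div_div_eq_div_mul, ne_eq, decide_eq_decide] at hn
    rw [pow_add, Nat.mod_mul_right_div_self]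
    omega
  have hpos := Nat.two_pow_pos s
  rw [Set.mem_Ico, ← Nat.div_lt_iff_lt_mul hpos, ← one_mul (2 ^ s), ← Nat.le_div_iff_mul_le hpos,
    one_mul]
  omega

lemma le_abs_fejerSum_of_testBit_ne (hx : x ∈ Eset (s + 1)) {n : ℕ}
    (hn : n.testBit s ≠ n.testBit (s + 1)) : 4 ^ s / 2 ≤ |fejerSum n x| := by
  obtain ⟨hr₁, hr₃⟩ := mod_two_pow_mem_Ico_of_testBit_ne hn
  rw [← Nat.div_add_mod n (2 ^ (s + 2)),
    fejerSum_two_pow_mul_add _ (Nat.mod_lt _ (Nat.two_pow_pos _)).le,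
    fejerSum_two_pow_mul_of_mem_Eset_succ hx,
    D_two_pow_mul_eq_zero (D_two_pow_of_mem_Eset_succ hx (by omega)), mul_zero, add_zero, zero_add,
    abs_mul, abs_walsh, one_mul]
  exact (le_fejerSum_of_mem_Eset_succ hx hr₁ hr₃).trans (le_abs_self _)

end Eset

section WalshMart

/-- The dyadic martingale with Walsh–Fourier coefficients `a`. -/
def walshMart (a : ℕ → ℝ) (n : ℕ) (x : G) : ℝ := ∑ i ∈ Finset.range (2 ^ n), a i * walsh i x

variable (a : ℕ → ℝ) (n m : ℕ) (x : G)

lemma rade_update_add_one : rade n (Function.update x n (x n + 1)) = -rade n x := by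
  have h : ∀ b : ZMod 2, (-1 : ℤ) ^ (b + 1).val = -(-1) ^ b.val := by decide
  simp only [rade, Function.update_self]
  exact_mod_cast h (x n)

variable {n x} in
lemma walshMart_congr {y : G} (h : ∀ k < n, x k = y k) : walshMart a n x = walshMart a n y :=
  Finset.sum_congr rfl fun _ hin => by rw [walsh_congr (Finset.mem_range.mp hin) h]

lemma walshMart_succ :
    walshMart a (n + 1) x =
      walshMart a n x + rade n x * walshMart (fun i => a (2 ^ n + i)) n x := by
  simp only [walshMart]
  rw [pow_succ, mul_two, Finset.sum_range_add, Finset.mul_sum]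
  congr 1
  refine Finset.sum_congr rfl fun i hin => ?_
  rw [walsh_two_pow_add (Finset.mem_range.mp hin), mul_left_comm]

lemma isDyadicMartingale_walshMart : IsDyadicMartingale (walshMart a) := by
  refine ⟨fun n x y h => walshMart_congr a h, fun n x => ?_⟩
  have hlow : ∀ k < n, Function.update x n (x n + 1) k = x k := fun k hk =>
    Function.update_of_ne hk.ne _ _
  rw [walshMart_succ, walshMart_succ, rade_update_add_one, walshMart_congr _ hlow,
    walshMart_congr _ hlow]
  ring

lemma mcoeff_walshMart (k : ℕ) : mcoeff (walshMart a) k = a k := by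
  have hk : k < 2 ^ (k + 1) := k.lt_succ_self.trans Nat.lt_two_pow_self
  have hint : ∀ i, Integrable (fun x => a i * (walsh i x * walsh k x)) μG := fun i =>
    integrable_of_continuous
      (continuous_const.mul ((continuous_walsh i).mul (continuous_walsh k)))
  simp only [mcoeff, walshMart, Finset.sum_mul, mul_assoc]
  rw [integral_finsetSum _ fun i _ => hint i]
  simp [integral_const_mul, integral_walsh_mul_walsh, hk]

lemma S_walshMart : S (walshMart a) m x = ∑ i ∈ Finset.range m, a i * walsh i x := by
  simp only [S, mcoeff_walshMart]

lemma S_walshMart_two_pow : S (walshMart a) (2 ^ m) x = walshMart a m x := S_walshMart a _ x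

lemma ωHp_walshMart (p : ℝ) :
    ωHp p n (walshMart a) = HpNorm p fun m x => walshMart a m x - walshMart a (min n m) x := by
  have hmin : ∀ m, min (2 ^ n) (2 ^ m) = 2 ^ min n m := fun m =>
    (Monotone.map_min (pow_right_mono₀ one_le_two)).symm
  simp only [ωHp, hmin, S_walshMart_two_pow]

lemma sum_S (F : ℕ → G → ℝ) :
    ∑ k ∈ Finset.Icc 1 n, S F k x =
      n * S F n x - ∑ i ∈ Finset.range n, i * (mcoeff F i * walsh i x) := by
  induction n with
  | zero => simp
  | succ n ih =>
    rw [Finset.sum_Icc_succ_top (Nat.le_add_left 1 n), ih, Finset.sum_range_succ, S, S,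
      Finset.sum_range_succ]
    push_cast
    ring

end WalshMart

section BlockMart

/-- The Walsh coefficients equal to `c N` on each dyadic block `[2 ^ N, 2 ^ (N + 1))`, and to `0`
at `0`. -/
def blockCoeff (c : ℕ → ℝ) (i : ℕ) : ℝ := if i = 0 then 0 else c (hi i)

/-- The martingale `∑ N, c N * (D_{2 ^ (N + 1)} - D_{2 ^ N})`. -/
def blockMart (c : ℕ → ℝ) : ℕ → G → ℝ := walshMart (blockCoeff c)

variable (c : ℕ → ℝ) {N n r : ℕ} (x : G)

variable {c} in
lemma blockCoeff_two_pow_add (hr : r < 2 ^ N) : blockCoeff c (2 ^ N + r) = c N := by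
  have hlog : hi (2 ^ N + r) = N :=
    Nat.log_eq_of_pow_le_of_lt_pow (Nat.le_add_right _ _) (by rw [pow_succ]; omega)
  rw [blockCoeff, hlog, if_neg (Nat.add_pos_left (Nat.two_pow_pos N) r).ne']

lemma blockMart_zero : blockMart c 0 x = 0 := by simp [blockMart, walshMart, blockCoeff]

lemma S_blockMart_two_pow_add (hr : r ≤ 2 ^ N) :
    S (blockMart c) (2 ^ N + r) x = blockMart c N x + c N * (rade N x * D r x) := by
  rw [blockMart, S_walshMart, Finset.sum_range_add, walshMart, D, Finset.mul_sum, Finset.mul_sum]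
  congr 1
  refine Finset.sum_congr rfl fun i hir => ?_
  have hiN : i < 2 ^ N := (Finset.mem_range.mp hir).trans_le hr
  rw [walsh_two_pow_add hiN, blockCoeff_two_pow_add hiN]

lemma blockMart_succ (n : ℕ) :
    blockMart c (n + 1) x = blockMart c n x + c n * (rade n x * D (2 ^ n) x) := by
  rw [← S_blockMart_two_pow_add c x le_rfl, ← mul_two, ← pow_succ, blockMart, S_walshMart_two_pow]

lemma enorm_blockMart_sub_le {m : ℕ} (hnm : n ≤ m) :
    ‖blockMart c m x - blockMart c n x‖ₑ ≤ ∑ N ∈ Finset.Ico n m, ‖c N * D (2 ^ N) x‖ₑ := by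
  induction m, hnm using Nat.le_induction with
  | base => simp
  | succ m hnm ih =>
    have hrade : ‖rade m x‖ₑ = 1 := by simp [Real.enorm_eq_ofReal_abs, abs_rade]
    rw [Finset.sum_Ico_succ_top hnm, blockMart_succ, add_sub_right_comm]
    refine (enorm_add_le _ _).trans (add_le_add ih (le_of_eq ?_))
    rw [enorm_mul, enorm_mul, hrade, one_mul, enorm_mul]

lemma iSup_enorm_blockMart_sub_rpow_le {p : ℝ} (hp₀ : 0 < p) (hp₁ : p ≤ 1) (n : ℕ) :
    (⨆ m, ‖blockMart c m x - blockMart c (min n m) x‖ₑ) ^ p ≤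
      ∑' i, ‖c (n + i) * D (2 ^ (n + i)) x‖ₑ ^ p := by
  rw [← ENNReal.le_rpow_inv_iff hp₀]
  refine iSup_le fun m => ?_
  rw [ENNReal.le_rpow_inv_iff hp₀]
  rcases le_total m n with hmn | hnm
  · simp [min_eq_right hmn, hp₀]
  · rw [min_eq_left hnm]
    calc ‖blockMart c m x - blockMart c n x‖ₑ ^ p
        ≤ (∑ N ∈ Finset.Ico n m, ‖c N * D (2 ^ N) x‖ₑ) ^ p := by
          gcongr
          exact enorm_blockMart_sub_le c x hnm
      _ ≤ ∑ N ∈ Finset.Ico n m, ‖c N * D (2 ^ N) x‖ₑ ^ p :=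
          Finset.le_sum_of_subadditive (fun t : ℝ≥0∞ => t ^ p) (ENNReal.zero_rpow_of_pos hp₀).le
            (fun s t => ENNReal.rpow_add_le_add_rpow s t hp₀.le hp₁) _ _
      _ ≤ ∑' i, ‖c (n + i) * D (2 ^ (n + i)) x‖ₑ ^ p := by
          rw [Finset.sum_Ico_eq_sum_range]
          exact ENNReal.sum_le_tsum _

lemma ωHp_blockMart_le {p : ℝ} (hp₀ : 0 < p) (hp₁ : p ≤ 1) (n : ℕ) :
    ωHp p n (blockMart c) ≤
      (∑' i, ‖c (n + i)‖ₑ ^ p * (2 ^ (n + i)) ^ (p - 1)) ^ (1 / p) := by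
  have hmeas : ∀ N, Measurable fun x => ‖D (2 ^ N) x‖ₑ ^ p := fun N =>
    (continuous_D _).measurable.enorm.pow_const p
  have hterm : ∀ N, ∫⁻ x, ‖c N * D (2 ^ N) x‖ₑ ^ p ∂μG = ‖c N‖ₑ ^ p * (2 ^ N) ^ (p - 1) := by
    intro N
    simp_rw [enorm_mul, ENNReal.mul_rpow_of_nonneg _ _ hp₀.le]
    rw [lintegral_const_mul _ (hmeas N), lintegral_enorm_D_two_pow_rpow hp₀]
  rw [blockMart, ωHp_walshMart, ← blockMart, HpNorm]
  refine ENNReal.rpow_le_rpow ?_ (one_div_nonneg.mpr hp₀.le)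
  calc ∫⁻ x, (⨆ m, ‖blockMart c m x - blockMart c (min n m) x‖ₑ) ^ p ∂μG
      ≤ ∫⁻ x, ∑' i, ‖c (n + i) * D (2 ^ (n + i)) x‖ₑ ^ p ∂μG :=
        lintegral_mono fun x => iSup_enorm_blockMart_sub_rpow_le c x hp₀ hp₁ n
    _ = ∑' i, ‖c (n + i)‖ₑ ^ p * (2 ^ (n + i)) ^ (p - 1) := by
        rw [lintegral_tsum fun i => (((continuous_D _).measurable.const_mul _).enorm.pow_const
          p).aemeasurable]
        simp only [hterm]

lemma ωHp_zero_blockMart (p : ℝ) : ωHp p 0 (blockMart c) = HpNorm p (blockMart c) := by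
  rw [blockMart, ωHp_walshMart, ← blockMart]
  simp [blockMart_zero]

variable {x} in
lemma mLim_blockMart_of_notMem_I₀ (hx : x ∉ I₀ n) : mLim (blockMart c) x = blockMart c n x := by
  have hstable : ∀ m ≥ n, blockMart c m x = blockMart c n x := by
    intro m hnm
    induction m, hnm using Nat.le_induction with
    | base => rfl
    | succ m hnm ih =>
      have hxm : x ∉ I₀ m := fun h => hx fun k hk => h k (hk.trans_le hnm)
      rw [blockMart_succ, ih, D_two_pow_of_notMem_I₀ hxm, mul_zero, mul_zero, add_zero]
  exact (tendsto_const_nhds.congr' ((eventually_ge_atTop n).mono fun m hm =>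
    (hstable m hm).symm)).limsup_eq

end BlockMart

section DigitChanges

/-- The positions `s` with `s + 1 < |n|` and `n_s ≠ n_{s + 1}`: the digit changes of `n` below its
top digit, where `E_{s + 1}` contributes to the lower bound for `σ_n F - F`. -/
def digitChanges (n : ℕ) : Finset ℕ :=
  {s ∈ Finset.range (hi n - 1) | n.testBit s ≠ n.testBit (s + 1)}

variable {n : ℕ}

lemma testBit_eq_false_of_hi_lt {k : ℕ} (hk : hi n < k) : n.testBit k = false :=
  testBit_eq_false_of_lt_two_pow_of_le (Nat.lt_pow_succ_log_self one_lt_two n) hk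

lemma V_le_card_digitChanges_add_three (n : ℕ) : V n ≤ (digitChanges n).card + 3 := by
  have hsub : {k ∈ Finset.Icc 1 (n + 1) | n.testBit k ≠ n.testBit (k - 1)} ⊆
      (digitChanges n).image (· + 1) ∪ {hi n, hi n + 1} := by
    intro k hk
    obtain ⟨⟨hk₁, -⟩, hne⟩ : (1 ≤ k ∧ k ≤ n + 1) ∧ n.testBit k ≠ n.testBit (k - 1) := by
      simpa using hk
    obtain ⟨s, rfl⟩ := Nat.exists_eq_add_of_le' hk₁
    have hs : s ≤ hi n := by
      by_contra! hlt
      exact hne (by simp [testBit_eq_false_of_hi_lt, hlt, hlt.trans s.lt_succ_self])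
    rw [Nat.add_sub_cancel] at hne
    simp only [Finset.mem_union, Finset.mem_image, digitChanges, Finset.mem_filter,
      Finset.mem_range, Finset.mem_insert, Finset.mem_singleton]
    rcases lt_or_ge (s + 1) (hi n) with hlt | hge
    · exact Or.inl ⟨s, ⟨by omega, hne.symm⟩, rfl⟩
    · exact Or.inr (by omega)
  have hcard := (Finset.card_le_card hsub).trans ((Finset.card_union_le _ _).trans
    (add_le_add Finset.card_image_le Finset.card_le_two))
  rw [V, ← Finset.card_filter]
  split_ifs <;> omega

lemma V_le_hi_add_three (n : ℕ) : V n ≤ hi n + 3 := by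
  have hcard : (digitChanges n).card ≤ hi n - 1 :=
    (Finset.card_filter_le _ _).trans_eq (Finset.card_range _)
  have hV := V_le_card_digitChanges_add_three n
  omega

lemma exists_eq_two_pow_hi_add (hn : n ≠ 0) : ∃ r < 2 ^ hi n, n = 2 ^ hi n + r := by
  obtain ⟨r, hr⟩ := Nat.exists_eq_add_of_le (Nat.pow_log_le_self 2 hn)
  have hlt : n < 2 ^ (hi n + 1) := Nat.lt_pow_succ_log_self one_lt_two n
  rw [pow_succ] at hlt
  exact ⟨r, by simp only [hi] at hlt ⊢; omega, hr⟩

lemma ne_zero_of_hi_pos (hn : 0 < hi n) : n ≠ 0 := by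
  rintro rfl
  simp [hi] at hn

end DigitChanges

section FejerMeans

variable {c : ℕ → ℝ} {M N n s : ℕ} {x : G}

lemma sum_S_blockMart_two_pow_add (hr : r ≤ 2 ^ N) (x : G) :
    ∑ k ∈ Finset.Icc 1 (2 ^ N + r), S (blockMart c) k x =
      ∑ k ∈ Finset.Icc 1 (2 ^ N), S (blockMart c) k x + r * blockMart c N x +
        c N * (rade N x * fejerSum r x) := by
  induction r with
  | zero => simp [fejerSum]
  | succ r ih =>
    rw [← add_assoc, Finset.sum_Icc_succ_top (by omega), ih (by omega), add_assoc (2 ^ N),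
      S_blockMart_two_pow_add c x hr, fejerSum_succ]
    push_cast
    ring

lemma abs_blockCoeff_le (hc : ∀ L < M, |c L| ≤ 2 ^ L) {i : ℕ} (hiM : i < 2 ^ M) :
    |blockCoeff c i| ≤ 2 ^ M := by
  rw [blockCoeff]
  split_ifs with h0
  · simp
  · have hL : hi i < M := Nat.log_lt_of_lt_pow h0 hiM
    exact (hc _ hL).trans (pow_le_pow_right₀ one_le_two hL.le)

lemma blockCoeff_eq_zero (hgap : ∀ L, M ≤ L → L < N → c L = 0) {i : ℕ} (hMi : 2 ^ M ≤ i)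
    (hiN : i < 2 ^ N) : blockCoeff c i = 0 := by
  have h0 : i ≠ 0 := (lt_of_lt_of_le (Nat.two_pow_pos M) hMi).ne'
  rw [blockCoeff, if_neg h0]
  exact hgap _ (Nat.le_log_of_pow_le one_lt_two hMi) (Nat.log_lt_of_lt_pow h0 hiN)

lemma abs_sum_mul_blockCoeff_le (hc : ∀ L < M, |c L| ≤ 2 ^ L)
    (hgap : ∀ L, M ≤ L → L < N → c L = 0) (x : G) :
    |∑ i ∈ Finset.range (2 ^ N), i * (blockCoeff c i * walsh i x)| ≤ 8 ^ M := by
  have hterm : ∀ i ∈ Finset.range (2 ^ N),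
      |i * (blockCoeff c i * walsh i x)| ≤ if i < 2 ^ M then 2 ^ M * 2 ^ M else 0 := by
    intro i hiN
    rw [abs_mul, abs_mul, abs_walsh, mul_one, Nat.abs_cast]
    split_ifs with hiM
    · gcongr
      · exact_mod_cast hiM.le
      · exact abs_blockCoeff_le hc hiM
    · simp [blockCoeff_eq_zero hgap (not_lt.mp hiM) (Finset.mem_range.mp hiN)]
  have hcard : (Finset.filter (· < 2 ^ M) (Finset.range (2 ^ N))).card ≤ 2 ^ M := by
    refine (Finset.card_le_card fun i hiM => ?_).trans_eq (Finset.card_range (2 ^ M))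
    exact Finset.mem_range.mpr (Finset.mem_filter.mp hiM).2
  calc |∑ i ∈ Finset.range (2 ^ N), i * (blockCoeff c i * walsh i x)|
      ≤ ∑ i ∈ Finset.range (2 ^ N), if i < 2 ^ M then (2 : ℝ) ^ M * 2 ^ M else 0 :=
        (Finset.abs_sum_le_sum_abs _ _).trans (Finset.sum_le_sum hterm)
    _ = (Finset.filter (· < 2 ^ M) (Finset.range (2 ^ N))).card * (2 ^ M * 2 ^ M) := by
        rw [← Finset.sum_filter, Finset.sum_const, nsmul_eq_mul]
    _ ≤ 2 ^ M * (2 ^ M * 2 ^ M) := by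
        gcongr
        exact_mod_cast hcard
    _ = 8 ^ M := by
        rw [← mul_pow, ← mul_pow]
        norm_num

lemma abs_σ_blockMart_sub_le (hc : ∀ L < M, |c L| ≤ 2 ^ L)
    (hgap : ∀ L, M ≤ L → L < hi n → c L = 0) (hs : s + 2 ≤ hi n) (hx : x ∈ Eset (s + 1)) :
    |σ (blockMart c) n x - mLim (blockMart c) x - c (hi n) * K n x| ≤ 8 ^ M / 2 ^ hi n := by
  have hn : n ≠ 0 := ne_zero_of_hi_pos (by omega)
  have hn₀ : (n : ℝ) ≠ 0 := Nat.cast_ne_zero.mpr hn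
  have hNn : (2 : ℝ) ^ hi n ≤ n := by exact_mod_cast Nat.pow_log_le_self 2 hn
  have hsN : s < hi n := by omega
  obtain ⟨r, hr, hnr⟩ := exists_eq_two_pow_hi_add hn
  have hK : fejerSum n x = rade (hi n) x * fejerSum r x := by
    conv_lhs => rw [hnr]
    rw [fejerSum_two_pow_add hr.le, fejerSum_two_pow_of_mem_Eset_succ hx hs,
      D_two_pow_of_mem_Eset_succ hx hsN, mul_zero, add_zero, zero_add]
  have hsum : ∑ k ∈ Finset.Icc 1 n, S (blockMart c) k x =
      n * blockMart c (hi n) x + c (hi n) * fejerSum n x -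
        ∑ i ∈ Finset.range (2 ^ hi n), i * (blockCoeff c i * walsh i x) := by
    have hcast : (n : ℝ) = 2 ^ hi n + r := by exact_mod_cast hnr
    conv_lhs => rw [hnr]
    rw [sum_S_blockMart_two_pow_add hr.le, sum_S, hK, hcast, blockMart, S_walshMart_two_pow]
    simp only [mcoeff_walshMart]
    push_cast
    ring
  have hsplit : σ (blockMart c) n x - mLim (blockMart c) x - c (hi n) * K n x =
      -(∑ i ∈ Finset.range (2 ^ hi n), i * (blockCoeff c i * walsh i x)) / n := by
    rw [mLim_blockMart_of_notMem_I₀ c (notMem_I₀_of_mem_Eset_succ hx hsN), σ, hsum,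
      K_eq_fejerSum_div]
    field_simp
    ring
  rw [hsplit, abs_div, abs_neg, Nat.abs_cast]
  gcongr
  exact abs_sum_mul_blockCoeff_le hc hgap x

end FejerMeans

section LowerBound

lemma card_mul_le_lintegral_rpow {f : G → ℝ≥0∞} {T : Finset ℕ} {a b : ℝ≥0∞}
    (h : ∀ s ∈ T, ∀ x ∈ Eset (s + 1), (a * 2 ^ s) ^ 2 ≤ f x + b ^ 2) :
    T.card * (a / 4) ≤ ∫⁻ x, f x ^ (1 / 2 : ℝ) ∂μG + b := by
  have hsqrt : ∀ t : ℝ≥0∞, (t ^ 2) ^ (1 / 2 : ℝ) = t := fun t => by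
    rw [← ENNReal.rpow_natCast, ← ENNReal.rpow_mul]
    norm_num
  have hpt : ∀ s ∈ T, ∀ x ∈ Eset (s + 1), a * 2 ^ s ≤ f x ^ (1 / 2 : ℝ) + b := by
    intro s hs x hx
    calc a * 2 ^ s = ((a * 2 ^ s) ^ 2) ^ (1 / 2 : ℝ) := (hsqrt _).symm
      _ ≤ (f x + b ^ 2) ^ (1 / 2 : ℝ) := ENNReal.rpow_le_rpow (h s hs x hx) (by norm_num)
      _ ≤ f x ^ (1 / 2 : ℝ) + (b ^ 2) ^ (1 / 2 : ℝ) :=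
          ENNReal.rpow_add_le_add_rpow _ _ (by norm_num) (by norm_num)
      _ = f x ^ (1 / 2 : ℝ) + b := by rw [hsqrt]
  have hconst : ∀ s, ∫⁻ _ in Eset (s + 1), a * 2 ^ s ∂μG = a / 4 := by
    intro s
    rw [setLIntegral_const, measure_Eset_succ, pow_add,
      ENNReal.mul_inv (by simp) (by simp), mul_assoc, ← mul_assoc (2 ^ s),
      ENNReal.mul_inv_cancel (by simp) (by simp), one_mul, div_eq_mul_inv]
    norm_num
  calc T.card * (a / 4) = ∑ s ∈ T, ∫⁻ _ in Eset (s + 1), a * 2 ^ s ∂μG := by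
        simp only [hconst, Finset.sum_const, nsmul_eq_mul]
    _ ≤ ∑ s ∈ T, ∫⁻ x in Eset (s + 1), f x ^ (1 / 2 : ℝ) + b ∂μG :=
        Finset.sum_le_sum fun s hs => setLIntegral_mono' (measurableSet_Eset_succ s) (hpt s hs)
    _ = ∫⁻ x in ⋃ s ∈ T, Eset (s + 1), f x ^ (1 / 2 : ℝ) + b ∂μG :=
        (lintegral_biUnion_finset (pairwise_disjoint_Eset_succ.set_pairwise _)
          (fun s _ => measurableSet_Eset_succ s) _).symm
    _ ≤ ∫⁻ x, f x ^ (1 / 2 : ℝ) + b ∂μG := setLIntegral_le_lintegral _ _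
    _ = ∫⁻ x, f x ^ (1 / 2 : ℝ) ∂μG + b := by simp [lintegral_add_right]

variable {c : ℕ → ℝ} {M n s : ℕ} {x : G}

lemma le_abs_K_of_mem_digitChanges (hs : s ∈ digitChanges n) (hx : x ∈ Eset (s + 1)) :
    4 ^ s / (4 * 2 ^ hi n) ≤ |K n x| := by
  obtain ⟨hsN, hne⟩ := Finset.mem_filter.mp hs
  have hn : n ≠ 0 := ne_zero_of_hi_pos (by have := Finset.mem_range.mp hsN; omega)
  have hn₀ : (0 : ℝ) < n := Nat.cast_pos.mpr (Nat.pos_of_ne_zero hn)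
  have hlt : (n : ℝ) ≤ 2 * 2 ^ hi n := by
    rw [← pow_succ']
    exact_mod_cast (Nat.lt_pow_succ_log_self one_lt_two n).le
  rw [K_eq_fejerSum_div, abs_div, Nat.abs_cast]
  calc (4 : ℝ) ^ s / (4 * 2 ^ hi n) = 4 ^ s / 2 / (2 * 2 ^ hi n) := by
        field_simp
        norm_num
    _ ≤ |fejerSum n x| / n :=
        div_le_div₀ (abs_nonneg _) (le_abs_fejerSum_of_testBit_ne hx hne) hn₀ hlt

lemma le_abs_σ_blockMart_sub_add (hc : ∀ L < M, |c L| ≤ 2 ^ L)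
    (hgap : ∀ L, M ≤ L → L < hi n → c L = 0) (hs : s ∈ digitChanges n) (hx : x ∈ Eset (s + 1)) :
    |c (hi n)| * (4 ^ s / (4 * 2 ^ hi n)) ≤
      |σ (blockMart c) n x - mLim (blockMart c) x| + 8 ^ M / 2 ^ hi n := by
  have hsN : s + 2 ≤ hi n := by
    have := Finset.mem_range.mp (Finset.mem_filter.mp hs).1
    omega
  have hmain : |c (hi n)| * (4 ^ s / (4 * 2 ^ hi n)) ≤ |c (hi n) * K n x| := by
    rw [abs_mul]
    gcongr
    exact le_abs_K_of_mem_digitChanges hs hx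
  have herr := abs_σ_blockMart_sub_le hc hgap hsN hx
  have htri := abs_sub_abs_le_abs_sub (c (hi n) * K n x)
    (σ (blockMart c) n x - mLim (blockMart c) x)
  rw [abs_sub_comm (c (hi n) * K n x)] at htri
  linarith

lemma ofReal_sq_le_enorm_σ_blockMart_sub_add (hc : ∀ L < M, |c L| ≤ 2 ^ L)
    (hgap : ∀ L, M ≤ L → L < hi n → c L = 0) (hM : 3 * M + 10 ≤ hi n)
    (hcn : c (hi n) = 2 ^ hi n / V n ^ 2) (hs : s ∈ digitChanges n) (hx : x ∈ Eset (s + 1)) :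
    (ENNReal.ofReal (1 / (2 * V n)) * 2 ^ s) ^ 2 ≤
      ‖σ (blockMart c) n x - mLim (blockMart c) x‖ₑ + ENNReal.ofReal (1 / 32) ^ 2 := by
  have hsmall : (8 : ℝ) ^ M / 2 ^ hi n ≤ (1 / 32) ^ 2 := by
    rw [div_le_iff₀ (by positivity)]
    calc (8 : ℝ) ^ M = (1 / 32) ^ 2 * 2 ^ (3 * M + 10) := by rw [pow_add, pow_mul]; ring
      _ ≤ (1 / 32) ^ 2 * 2 ^ hi n := by gcongr; exact one_le_two
  have hreal : (1 / (2 * V n) * 2 ^ s : ℝ) ^ 2 ≤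
      |σ (blockMart c) n x - mLim (blockMart c) x| + (1 / 32) ^ 2 := by
    calc (1 / (2 * V n) * 2 ^ s : ℝ) ^ 2 = |c (hi n)| * (4 ^ s / (4 * 2 ^ hi n)) := by
          rw [hcn, abs_of_nonneg (by positivity), mul_pow, pow_right_comm]
          field_simp
          ring
      _ ≤ |σ (blockMart c) n x - mLim (blockMart c) x| + 8 ^ M / 2 ^ hi n :=
          le_abs_σ_blockMart_sub_add hc hgap hs hx
      _ ≤ _ := by gcongr
  have hofReal := ENNReal.ofReal_le_ofReal hreal
  rwa [ENNReal.ofReal_pow (by positivity), ENNReal.ofReal_mul (by positivity),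
    ENNReal.ofReal_pow zero_le_two, ENNReal.ofReal_ofNat,
    ENNReal.ofReal_add (abs_nonneg _) (by positivity), ← Real.enorm_eq_ofReal_abs,
    ENNReal.ofReal_pow (by norm_num)] at hofReal

lemma le_LpN_σ_blockMart_sub (hc : ∀ L < M, |c L| ≤ 2 ^ L)
    (hgap : ∀ L, M ≤ L → L < hi n → c L = 0) (hM : 3 * M + 10 ≤ hi n) (hV : 6 ≤ V n)
    (hcn : c (hi n) = 2 ^ hi n / V n ^ 2) :
    ENNReal.ofReal (1 / 32) ^ 2 ≤
      LpN (1 / 2) fun x => σ (blockMart c) n x - mLim (blockMart c) x := by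
  have hcard : (1 / 32 + 1 / 32 : ℝ) ≤ (digitChanges n).card * (1 / (2 * V n) / 4) := by
    have hVcard : (V n : ℝ) ≤ (digitChanges n).card + 3 := by
      exact_mod_cast V_le_card_digitChanges_add_three n
    have hV₆ : (6 : ℝ) ≤ V n := by exact_mod_cast hV
    field_simp
    linarith
  have hintegral := card_mul_le_lintegral_rpow fun s hs x hx =>
    ofReal_sq_le_enorm_σ_blockMart_sub_add hc hgap hM hcn hs (x := x) hx
  rw [← ENNReal.ofReal_ofNat 4, ← ENNReal.ofReal_div_of_pos four_pos, ← ENNReal.ofReal_natCast,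
    ← ENNReal.ofReal_mul (by positivity)] at hintegral
  have hsum := (ENNReal.ofReal_le_ofReal hcard).trans hintegral
  rw [ENNReal.ofReal_add (by norm_num) (by norm_num),
    ENNReal.add_le_add_iff_right ENNReal.ofReal_ne_top] at hsum
  rw [LpN, one_div_one_div, ENNReal.rpow_two]
  exact pow_le_pow_left₀ zero_le hsum 2

end LowerBound

section Selection

lemma exists_le_and_forall_le {ι : Type*} {f g : ι → ℕ}
    (hbdd : ∀ b, BddAbove (f '' {i | g i ≤ b})) (hunbdd : ∀ C, ∃ k, C ≤ f k) (C : ℕ) :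
    ∃ k, C ≤ f k ∧ ∀ i, g i ≤ g k → f i ≤ f k := by
  obtain ⟨k₀, hk₀⟩ := hunbdd C
  have hmem₀ : f k₀ ∈ f '' {i | g i ≤ g k₀} := ⟨k₀, le_refl (g k₀), rfl⟩
  obtain ⟨k, hk, hmax⟩ := Nat.sSup_mem ⟨_, hmem₀⟩ (hbdd (g k₀))
  refine ⟨k, ?_, fun i hik => ?_⟩
  · exact hmax ▸ hk₀.trans (le_csSup (hbdd _) hmem₀)
  · exact hmax ▸ le_csSup (hbdd _) (Set.mem_image_of_mem f (hik.trans hk))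

lemma exists_sparse_records {nk : ℕ → ℕ} (hV : ∀ C : ℕ, ∃ k, C ≤ V (nk k)) :
    ∃ u : ℕ → ℕ, (∀ j, 6 ≤ V (nk (u j))) ∧ (∀ j, 2 * V (nk (u j)) ≤ V (nk (u (j + 1)))) ∧
      (∀ j, 3 * (hi (nk (u j)) + 1) + 10 ≤ hi (nk (u (j + 1)))) ∧
      ∀ j i, hi (nk i) ≤ hi (nk (u j)) → V (nk i) ≤ V (nk (u j)) := by
  have hbdd : ∀ b, BddAbove ((fun k => V (nk k)) '' {k | hi (nk k) ≤ b}) := fun b =>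
    ⟨b + 3, Set.forall_mem_image.mpr fun k hk =>
      (V_le_hi_add_three _).trans (Nat.add_le_add_right hk 3)⟩
  -- `V n ≤ |n| + 3` turns the growth of `V` along the chosen indices into growth of `|n|`.
  choose r hr hrecord using exists_le_and_forall_le hbdd hV
  let u : ℕ → ℕ := Nat.rec (r 6) fun _ k => r (2 * V (nk k) + 3 * hi (nk k) + 16)
  have hu : ∀ j, 2 * V (nk (u j)) + 3 * hi (nk (u j)) + 16 ≤ V (nk (u (j + 1))) := fun j => hr _
  refine ⟨u, fun j => ?_, fun j => ?_, fun j => ?_, fun j => ?_⟩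
  · cases j with
    | zero => exact hr 6
    | succ j => exact le_trans (by omega) (hu j)
  · exact le_trans (by omega) (hu j)
  · have hle := (hu j).trans (V_le_hi_add_three _)
    omega
  · cases j with
    | zero => exact hrecord 6
    | succ j => exact hrecord _

end Selection

section Lacunary

/-- The block heights `2 ^ N_j / v_j ^ 2` at the positions `N_j`, and `0` elsewhere. -/
def lacCoeff (N v : ℕ → ℕ) : ℕ → ℝ := Function.extend N (fun j => 2 ^ N j / v j ^ 2) 0

variable {N v : ℕ → ℕ}

lemma lacCoeff_apply (hN : N.Injective) (j : ℕ) : lacCoeff N v (N j) = 2 ^ N j / v j ^ 2 :=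
  hN.extend_apply _ _ j

lemma lacCoeff_of_notMem_range {L : ℕ} (hL : L ∉ Set.range N) : lacCoeff N v L = 0 :=
  Function.extend_apply' _ _ _ hL

lemma lacCoeff_eq_zero_of_lt_of_lt (hN : StrictMono N) {j L : ℕ} (hjL : N j < L)
    (hLj : L < N (j + 1)) : lacCoeff N v L = 0 := by
  refine lacCoeff_of_notMem_range ?_
  rintro ⟨i, rfl⟩
  have hji := hN.lt_iff_lt.mp hjL
  have hij := hN.lt_iff_lt.mp hLj
  omega

lemma abs_lacCoeff_le (hN : N.Injective) (hv : ∀ j, 0 < v j) (L : ℕ) :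
    |lacCoeff N v L| ≤ 2 ^ L := by
  by_cases hL : L ∈ Set.range N
  · obtain ⟨j, rfl⟩ := hL
    have hvj : (1 : ℝ) ≤ v j ^ 2 := one_le_pow₀ (by exact_mod_cast hv j)
    rw [lacCoeff_apply hN, abs_of_nonneg (by positivity)]
    exact div_le_self (by positivity) hvj
  · simp [lacCoeff_of_notMem_range hL]

lemma enorm_lacCoeff_rpow_mul (hN : N.Injective) (hv : ∀ j, 0 < v j) (j : ℕ) :
    ‖lacCoeff N v (N j)‖ₑ ^ (1 / 2 : ℝ) * (2 ^ N j) ^ (1 / 2 - 1 : ℝ) = (v j : ℝ≥0∞)⁻¹ := by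
  have hvj : (0 : ℝ) < v j := Nat.cast_pos.mpr (hv j)
  have henorm : ‖lacCoeff N v (N j)‖ₑ = 2 ^ N j * ((v j : ℝ≥0∞)⁻¹) ^ (2 : ℝ) := by
    rw [lacCoeff_apply hN, Real.enorm_of_nonneg (by positivity),
      ENNReal.ofReal_div_of_pos (by positivity), ENNReal.ofReal_pow zero_le_two,
      ENNReal.ofReal_pow hvj.le, ENNReal.ofReal_natCast, ENNReal.ofReal_ofNat, div_eq_mul_inv,
      ENNReal.rpow_two, ENNReal.inv_pow]
  rw [henorm, ENNReal.mul_rpow_of_nonneg _ _ (by norm_num), ← ENNReal.rpow_mul, mul_right_comm,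
    ← ENNReal.rpow_add _ _ (by simp) (by simp)]
  norm_num

lemma tsum_add_eq_of_support_subset_range (hN : StrictMono N) {f : ℕ → ℝ≥0∞}
    (hf : f.support ⊆ Set.range N) (n : ℕ) :
    ∃ j₀, n ≤ N j₀ ∧ ∑' i, f (n + i) = ∑' i, f (N (j₀ + i)) := by
  classical
  have hex : ∃ j, n ≤ N j := ⟨n, hN.le_apply⟩
  have hle : ∀ i, n ≤ N (Nat.find hex + i) := fun i =>
    (Nat.find_spec hex).trans (hN.monotone (Nat.le_add_right _ i))
  have hinj : Function.Injective fun i => N (Nat.find hex + i) - n := fun i j hij =>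
    Nat.add_left_cancel (hN.injective ((tsub_left_inj (hle i) (hle j)).mp hij))
  refine ⟨Nat.find hex, Nat.find_spec hex, ?_⟩
  rw [← hinj.tsum_eq]
  · simp only [Nat.add_sub_cancel' (hle _)]
  · intro i hmem
    obtain ⟨j, hj⟩ := hf hmem
    obtain ⟨k, rfl⟩ := Nat.exists_eq_add_of_le (Nat.find_min' hex (hj ▸ Nat.le_add_right n i))
    exact ⟨k, by simp [hj]⟩

lemma mul_tsum_inv_le (hv : ∀ j, 2 * v j ≤ v (j + 1)) {w j₀ : ℕ} (hw : w ≤ v j₀) :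
    (w : ℝ≥0∞) * ∑' i, (v (j₀ + i) : ℝ≥0∞)⁻¹ ≤ 2 := by
  have hgrow : ∀ i, 2 ^ i * w ≤ v (j₀ + i) := by
    intro i
    induction i with
    | zero => simpa using hw
    | succ i ih =>
      rw [pow_succ', mul_assoc]
      exact (Nat.mul_le_mul_left 2 ih).trans (hv (j₀ + i))
  rw [← ENNReal.tsum_mul_left, ← ENNReal.tsum_geometric_two]
  refine ENNReal.tsum_le_tsum fun i => ?_
  rw [← div_eq_mul_inv]
  refine ENNReal.div_le_of_le_mul ?_
  calc (w : ℝ≥0∞) = 2⁻¹ ^ i * (2 ^ i * w) := by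
        rw [← mul_assoc, ← mul_pow, ENNReal.inv_mul_cancel (by simp) (by simp), one_pow, one_mul]
    _ ≤ 2⁻¹ ^ i * v (j₀ + i) := by
        gcongr
        exact_mod_cast hgrow i

lemma sq_mul_ωHp_blockMart_lacCoeff_le (hN : StrictMono N) (hv : ∀ j, 0 < v j)
    (hv₂ : ∀ j, 2 * v j ≤ v (j + 1)) {n w : ℕ} (hw : ∀ j, n ≤ N j → w ≤ v j) :
    (w : ℝ≥0∞) ^ 2 * ωHp (1 / 2) n (blockMart (lacCoeff N v)) ≤ 4 := by
  set f : ℕ → ℝ≥0∞ := fun L =>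
    ‖lacCoeff N v L‖ₑ ^ (1 / 2 : ℝ) * (2 ^ L) ^ (1 / 2 - 1 : ℝ) with hf
  have hsupp : f.support ⊆ Set.range N := fun L hL => by
    by_contra hLN
    exact hL (by simp [hf, lacCoeff_of_notMem_range hLN])
  obtain ⟨j₀, hj₀, htsum⟩ := tsum_add_eq_of_support_subset_range hN hsupp n
  have hωHp : ωHp (1 / 2) n (blockMart (lacCoeff N v)) ≤ (∑' i, (v (j₀ + i) : ℝ≥0∞)⁻¹) ^ 2 := by
    refine (ωHp_blockMart_le _ (by norm_num) (by norm_num) n).trans_eq ?_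
    rw [htsum, one_div_one_div, ENNReal.rpow_two]
    simp only [hf, enorm_lacCoeff_rpow_mul hN.injective hv]
  calc (w : ℝ≥0∞) ^ 2 * ωHp (1 / 2) n (blockMart (lacCoeff N v))
      ≤ (w * ∑' i, (v (j₀ + i) : ℝ≥0∞)⁻¹) ^ 2 := by
        rw [mul_pow]
        gcongr
    _ ≤ 2 ^ 2 := by
        gcongr
        exact mul_tsum_inv_le hv₂ (hw j₀ hj₀)
    _ = 4 := by norm_num

lemma memHp_blockMart_lacCoeff (hN : StrictMono N) (hv : ∀ j, 0 < v j)
    (hv₂ : ∀ j, 2 * v j ≤ v (j + 1)) : MemHp (1 / 2) (blockMart (lacCoeff N v)) := by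
  refine ⟨isDyadicMartingale_walshMart _, ?_⟩
  have hle := sq_mul_ωHp_blockMart_lacCoeff_le (n := 0) (w := 1) hN hv hv₂ fun j _ => hv j
  rw [Nat.cast_one, one_pow, one_mul, ωHp_zero_blockMart] at hle
  exact hle.trans_lt (by simp)

end Lacunary

/-- sharpness — there is `F ∈ H_{1/2}` with
`ω_{H_{1/2}}(1/2^{|n_k|}, F) = O(1/V(n_k)²)` and `‖σ_{n_k}F - F‖_{1/2} ↛ 0`. -/
theorem fejer_divergence_modulus_half (nk : ℕ → ℕ) (hpos : ∀ k, 1 ≤ nk k)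
    (hV : ∀ C : ℕ, ∃ k, C ≤ V (nk k)) :
    ∃ F : ℕ → G → ℝ, MemHp (1/2) F ∧
      (∃ C : ℝ≥0, ∀ k, (V (nk k) : ℝ≥0∞) ^ 2 * ωHp (1/2) (hi (nk k)) F ≤ C) ∧
      ¬ Tendsto (fun k => LpN (1/2) (fun x => σ F (nk k) x - mLim F x)) atTop (𝓝 0) := by
  obtain ⟨u, hsix, hdouble, hgap, hrecord⟩ := exists_sparse_records hV
  let N : ℕ → ℕ := fun j => hi (nk (u j))
  let v : ℕ → ℕ := fun j => V (nk (u j))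
  have hN : StrictMono N := strictMono_nat_of_lt_succ fun j =>
    show hi _ < hi _ by have := hgap j; omega
  have hv : ∀ j, 0 < v j := fun j => lt_of_lt_of_le (by norm_num) (hsix j)
  refine ⟨blockMart (lacCoeff N v), memHp_blockMart_lacCoeff hN hv hdouble, ⟨4, fun k => ?_⟩,
    fun hlim => ?_⟩
  · exact sq_mul_ωHp_blockMart_lacCoeff_le hN hv hdouble fun j => hrecord j k
  · have hlower : ∀ j, ENNReal.ofReal (1 / 32) ^ 2 ≤ LpN (1 / 2) fun x =>
        σ (blockMart (lacCoeff N v)) (nk (u (j + 1))) x - mLim (blockMart (lacCoeff N v)) x :=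
      fun j => le_LpN_σ_blockMart_sub (fun L _ => abs_lacCoeff_le hN.injective hv L)
        (fun L hjL hLj => lacCoeff_eq_zero_of_lt_of_lt hN hjL hLj) (hgap j) (hsix (j + 1))
        (lacCoeff_apply hN.injective (j + 1))
    have hu : Function.Injective fun j => u (j + 1) :=
      .of_comp (f := fun k => hi (nk k)) (hN.injective.comp Nat.succ_injective)
    have hle := ge_of_tendsto' (hlim.comp hu.nat_tendsto_atTop) hlower
    simp at hle
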